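/- arXiv:1609.01782 — 3 statements merged into one kernel-verified Lean document; each statement's English description precedes it below -/
import Mathlib

section
/- For every n ≥ 1, the polytope P_n(132,312) equals the set {x ∈ ℝ^n : x_1 + ⋯ + x_n = n(n+1)/2, and |(x_1 + ⋯ + x_j) − j·x_{j+1}| ≤ j(j+1)/2 for every 1 ≤ j ≤ n−1}. In particular, P_n(132,312) is an (n−1)-dimensional rectangular parallelepiped lying in the hyperplane Σ x_i = n(n+1)/2. -/
open Pointwise

/-- `σ` contains the pattern `π`. -/
def containsPattern {n k : ℕ} (σ : Equiv.Perm (Fin n)) (π : Equiv.Perm (Fin k)) : Prop :=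
  ∃ f : Fin k → Fin n, StrictMono f ∧ ∀ a b : Fin k, σ (f a) < σ (f b) ↔ π a < π b

/-- The pattern 132. -/
def p132 : Equiv.Perm (Fin 3) := Equiv.swap 1 2
/-- The pattern 312. -/
def p312 : Equiv.Perm (Fin 3) := (finRotate 3)⁻¹

/-- The point `(σ(1), …, σ(n)) ∈ ℝ^n` (one-based values). -/
def permPoint {n : ℕ} (σ : Equiv.Perm (Fin n)) : Fin n → ℝ := fun i => ((σ i : ℕ) : ℝ) + 1

/-- The polytope `P_n(132,312)`. -/
def P132312 (n : ℕ) : Set (Fin n → ℝ) :=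
  convexHull ℝ (permPoint ''
    {σ : Equiv.Perm (Fin n) | ¬ containsPattern σ p132 ∧ ¬ containsPattern σ p312})

/-! A permutation avoids 132 and 312 exactly when each of its entries is a left-to-right maximum or
minimum. The first `j + 1` values of such a permutation form an interval, whence the inequality
`|(x₀ + ⋯ + x_{j-1}) - j xⱼ| ≤ j (j + 1) / 2`, with equality at the identity. The normals
`e₀ + ⋯ + e_{j-1} - j eⱼ` of these slabs are pairwise orthogonal, so inside the hyperplane of fixed
coordinate sum the slabs cut out the rectangular parallelepiped based at the identity with these
vectors as edges. Conversely, adding to the identity the edges indexed by a set `D` gives the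
avoider whose left-to-right minima are at the positions in `D` and, possibly, at position `0`, so
every vertex of the parallelepiped comes from an avoider. -/

open Finset

section Intervals

lemma eq_Icc_min'_max'_of_ordConnected {α : Type*} [LinearOrder α] [LocallyFiniteOrder α]
    {T : Finset α} (hT : (T : Set α).OrdConnected) (hne : T.Nonempty) :
    T = Icc (T.min' hne) (T.max' hne) := by
  refine Subset.antisymm (fun y hy => mem_Icc.2 ⟨T.min'_le y hy, T.le_max' y hy⟩) fun y hy => ?_
  exact hT.out (T.min'_mem hne) (T.max'_mem hne) (mem_Icc.1 hy)

lemma sum_Icc_natCast_sub_mul_two {R : Type*} [CommRing R] {a b : ℕ} (hab : a ≤ b) (x : R) :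
    (∑ k ∈ Icc a b, ((k : R) - x)) * 2 = (b - a + 1) * (a + b - 2 * x) := by
  induction b, hab using Nat.le_induction with
  | base => rw [Icc_self, sum_singleton]; ring
  | succ b hab ih => rw [sum_Icc_succ_top (by omega), add_mul, ih]; push_cast; ring

lemma abs_sum_Icc_natCast_sub_le {a b x : ℕ} (hax : a ≤ x) (hxb : x ≤ b) :
    |∑ k ∈ Icc a b, ((k : ℝ) - x)| ≤ (b - a) * (b - a + 1) / 2 := by
  have hax' : (a : ℝ) ≤ x := mod_cast hax
  have hxb' : (x : ℝ) ≤ b := mod_cast hxb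
  have hsum := sum_Icc_natCast_sub_mul_two (hax.trans hxb) (x : ℝ)
  have hmid : |(a + b - 2 * x : ℝ)| ≤ b - a := abs_le.2 ⟨by linarith, by linarith⟩
  calc |∑ k ∈ Icc a b, ((k : ℝ) - x)| = |(b - a + 1) / 2 * (a + b - 2 * x : ℝ)| := by
        congr 1; linarith
    _ = (b - a + 1) / 2 * |(a + b - 2 * x : ℝ)| := by
        rw [abs_mul, abs_of_nonneg (by linarith)]
    _ ≤ (b - a + 1) / 2 * (b - a) := mul_le_mul_of_nonneg_left hmid (by linarith)
    _ = (b - a) * (b - a + 1) / 2 := by ring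

lemma sum_Icc_fin {M : Type*} [AddCommMonoid M] {n : ℕ} (a b : Fin n) (f : ℕ → M) :
    ∑ i ∈ Icc a b, f i = ∑ k ∈ Icc (a : ℕ) b, f k := by
  rw [← Fin.map_valEmbedding_Icc, sum_map]
  rfl

end Intervals

section Permutations

variable {n : ℕ}

lemma sort_symm_lt_sort_symm_iff {α : Type*} [LinearOrder α] {f : Fin n → α}
    (hf : Function.Injective f) {i j : Fin n} :
    (Tuple.sort f).symm i < (Tuple.sort f).symm j ↔ f i < f j := by
  have hmono : StrictMono (f ∘ Tuple.sort f) :=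
    (Tuple.monotone_sort f).strictMono_of_injective (hf.comp (Tuple.sort f).injective)
  simpa using hmono.lt_iff_lt (a := (Tuple.sort f).symm i) (b := (Tuple.sort f).symm j).symm

lemma card_filter_perm_lt (σ : Equiv.Perm (Fin n)) (k : Fin n) :
    #{l | σ l < σ k} = (σ k : ℕ) := by
  rw [← Fin.card_Iio, ← card_map σ.toEmbedding]
  congr 1
  ext y
  simp

end Permutations

section Parallelepipeds

lemma dotProduct_sub_sum_projections_eq_zero {ι κ K : Type*} [Fintype ι] [Fintype κ]
    [Field K] [LinearOrder K] [IsStrictOrderedRing K] {v : ι → κ → K}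
    (hv : Pairwise fun i j => v i ⬝ᵥ v j = 0) (y : κ → K) (j : ι) :
    v j ⬝ᵥ (y - ∑ i, (v i ⬝ᵥ y / v i ⬝ᵥ v i) • v i) = 0 := by
  have hsingle : ∑ i, v j ⬝ᵥ ((v i ⬝ᵥ y / v i ⬝ᵥ v i) • v i)
      = v j ⬝ᵥ y / v j ⬝ᵥ v j * v j ⬝ᵥ v j := by
    rw [Fintype.sum_eq_single j fun i hij => by rw [dotProduct_smul, hv hij.symm, smul_zero],
      dotProduct_smul, smul_eq_mul]
  rw [dotProduct_sub, dotProduct_sum, hsingle, sub_eq_zero]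
  by_cases hj : v j = 0
  · simp [hj]
  · rw [div_mul_cancel₀ _ (dotProduct_self_eq_zero.not.2 hj)]

lemma parallelepiped_eq_parallelepiped_succ {E : Type*} [AddCommGroup E] [Module ℝ E] {m : ℕ}
    {v : Fin (m + 1) → E} (hv : v 0 = 0) :
    parallelepiped v = parallelepiped fun i : Fin m => v i.succ := by
  simp_rw [parallelepiped_eq_sum_segment, Fin.sum_univ_succ, hv, segment_same,
    Set.singleton_zero, zero_add]

lemma vadd_parallelepiped_eq_setOf {ι E : Type*} [Fintype ι] [AddCommGroup E] [Module ℝ E]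
    (b : E) (v : ι → E) :
    b +ᵥ parallelepiped v =
      {x | ∃ t : ι → ℝ, (∀ i, t i ∈ Set.Icc (0 : ℝ) 1) ∧ x = b + ∑ i, t i • v i} := by
  ext x
  simp only [Set.mem_vadd_set, mem_parallelepiped_iff, ← Set.pi_univ_Icc, Set.mem_univ_pi,
    Pi.zero_apply, Pi.one_apply, Set.mem_ofPred_eq, vadd_eq_add]
  constructor
  · rintro ⟨_, ⟨t, ht, rfl⟩, rfl⟩
    exact ⟨t, ht, rfl⟩
  · rintro ⟨t, ht, rfl⟩
    exact ⟨_, ⟨t, ht, rfl⟩, rfl⟩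

end Parallelepipeds

section Patterns

variable {n k : ℕ}

lemma containsPattern_iff_strictMono {σ : Equiv.Perm (Fin n)} {π : Equiv.Perm (Fin k)} :
    containsPattern σ π ↔ ∃ f : Fin k → Fin n, StrictMono f ∧ StrictMono (σ ∘ f ∘ π.symm) := by
  refine exists_congr fun f => and_congr_right fun _ => ⟨fun h a b hab => ?_, fun h a b => ?_⟩
  · simpa [h] using hab
  · simpa using h.lt_iff_lt (a := π a) (b := π b)

lemma containsPattern_p132_iff {σ : Equiv.Perm (Fin n)} :
    containsPattern σ p132 ↔ ∃ a b c, a < b ∧ b < c ∧ σ a < σ c ∧ σ c < σ b := by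
  rw [containsPattern_iff_strictMono]
  constructor
  · rintro ⟨f, hf, hσ⟩
    exact ⟨f 0, f 1, f 2, hf (by decide), hf (by decide),
      hσ (a := 0) (b := 1) (by decide), hσ (a := 1) (b := 2) (by decide)⟩
  · rintro ⟨a, b, c, hab, hbc, hac, hcb⟩
    refine ⟨![a, b, c], by simp [hab, hbc], ?_⟩
    have : σ ∘ ![a, b, c] ∘ p132.symm = ![σ a, σ c, σ b] := by
      ext i; fin_cases i <;> rfl
    simp [this, hac, hcb]

lemma containsPattern_p312_iff {σ : Equiv.Perm (Fin n)} :
    containsPattern σ p312 ↔ ∃ a b c, a < b ∧ b < c ∧ σ b < σ c ∧ σ c < σ a := by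
  rw [containsPattern_iff_strictMono]
  constructor
  · rintro ⟨f, hf, hσ⟩
    exact ⟨f 0, f 1, f 2, hf (by decide), hf (by decide),
      hσ (a := 0) (b := 1) (by decide), hσ (a := 1) (b := 2) (by decide)⟩
  · rintro ⟨a, b, c, hab, hbc, hbc', hca⟩
    refine ⟨![a, b, c], by simp [hab, hbc], ?_⟩
    have : σ ∘ ![a, b, c] ∘ p312.symm = ![σ b, σ c, σ a] := by
      ext i; fin_cases i <;> rfl
    simp [this, hbc', hca]

/-- Every entry of `σ` is a record: a left-to-right maximum or a left-to-right minimum. -/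
def AllEntriesRecords (σ : Equiv.Perm (Fin n)) : Prop :=
  ∀ j, (∀ i < j, σ i < σ j) ∨ ∀ i < j, σ j < σ i

lemma avoids_p132_p312_iff {σ : Equiv.Perm (Fin n)} :
    (¬ containsPattern σ p132 ∧ ¬ containsPattern σ p312) ↔ AllEntriesRecords σ := by
  rw [containsPattern_p132_iff, containsPattern_p312_iff]
  constructor
  · rintro ⟨h132, h312⟩ c
    by_contra! ⟨⟨i, hi, hci⟩, i', hi', hic'⟩
    replace hci : σ c < σ i := hci.lt_of_ne (σ.injective.ne hi.ne')
    replace hic' : σ i' < σ c := hic'.lt_of_ne (σ.injective.ne hi'.ne)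
    rcases lt_trichotomy i i' with h | rfl | h
    · exact h312 ⟨i, i', c, h, hi', hic', hci⟩
    · exact hci.asymm hic'
    · exact h132 ⟨i', i, c, h, hi, hic', hci⟩
  · intro h
    constructor
    · rintro ⟨a, b, c, hab, hbc, hac, hcb⟩
      rcases h c with hc | hc
      · exact hcb.asymm (hc b hbc)
      · exact hac.asymm (hc a (hab.trans hbc))
    · rintro ⟨a, b, c, hab, hbc, hbc', hca⟩
      rcases h c with hc | hc
      · exact hca.asymm (hc a (hab.trans hbc))
      · exact hbc'.asymm (hc b hbc)

lemma AllEntriesRecords.ordConnected_map_Iic {σ : Equiv.Perm (Fin n)} (hσ : AllEntriesRecords σ)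
    (j : Fin n) :
    (((Iic j).map σ.toEmbedding : Finset (Fin n)) : Set (Fin n)).OrdConnected := by
  refine ⟨fun x hx z hz y hy => ?_⟩
  simp only [coe_map, Equiv.coe_toEmbedding, coe_Iic, Set.mem_image, Set.mem_Iic] at hx hz ⊢
  obtain ⟨i, hi, rfl⟩ := hx
  obtain ⟨i', hi', rfl⟩ := hz
  obtain ⟨c, rfl⟩ := σ.surjective y
  -- A value between two of the first `j + 1` values would not be a record if it occurred later.
  refine ⟨c, not_lt.1 fun hjc => ?_, rfl⟩
  rcases hσ c with hc | hc
  · exact (hc i' (hi'.trans_lt hjc)).not_ge hy.2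
  · exact (hc i (hi.trans_lt hjc)).not_ge hy.1

lemma AllEntriesRecords.exists_map_Iic_eq_Icc {σ : Equiv.Perm (Fin n)} (hσ : AllEntriesRecords σ)
    (j : Fin n) :
    ∃ a b : Fin n, (b : ℕ) = a + j ∧ (Iic j).map σ.toEmbedding = Icc a b := by
  have hne : ((Iic j).map σ.toEmbedding).Nonempty := by simp
  have hIcc := eq_Icc_min'_max'_of_ordConnected (hσ.ordConnected_map_Iic j) hne
  refine ⟨_, _, ?_, hIcc⟩
  have hcard := congrArg card hIcc
  simp only [card_map, Fin.card_Iic, Fin.card_Icc] at hcard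
  omega

end Patterns

section RecordEdge

variable {n : ℕ}

/-- The vector `e₀ + ⋯ + e_{j-1} - j e_j`: the direction of the edge at the identity of
`P_n(132,312)` along which entry `j` turns from a left-to-right maximum into a left-to-right
minimum. It vanishes for `j = 0`, which keeps the family indexed by all of `Fin n`. -/
def recordEdge (j : Fin n) : Fin n → ℝ :=
  fun k => (if k < j then 1 else 0) - if k = j then (j : ℝ) else 0

lemma recordEdge_of_lt {j k : Fin n} (h : k < j) : recordEdge j k = 1 := by
  simp [recordEdge, h, h.ne]

lemma recordEdge_self (j : Fin n) : recordEdge j j = -j := by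
  simp [recordEdge]

lemma recordEdge_zero : recordEdge (0 : Fin (n + 1)) = 0 := by
  ext k; simp [recordEdge]

lemma recordEdge_ne_zero {j : Fin (n + 1)} (hj : j ≠ 0) : recordEdge j ≠ 0 := fun h => by
  simpa [recordEdge_of_lt (Fin.pos_iff_ne_zero.2 hj)] using congrFun h 0

lemma recordEdge_dotProduct (j : Fin n) (x : Fin n → ℝ) :
    recordEdge j ⬝ᵥ x = ∑ i ∈ Iio j, (x i - x j) := by
  simp [recordEdge, dotProduct, sub_mul, ite_mul, sum_sub_distrib, ← sum_filter,
    filter_gt_eq_Iio]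

lemma recordEdge_dotProduct_one (j : Fin n) : recordEdge j ⬝ᵥ 1 = 0 := by
  simp [recordEdge_dotProduct]

lemma recordEdge_dotProduct_self (j : Fin n) :
    recordEdge j ⬝ᵥ recordEdge j = j * (j + 1) := by
  have h : ∀ i ∈ Iio j, recordEdge j i - recordEdge j j = j + 1 := fun i hi => by
    rw [recordEdge_of_lt (mem_Iio.1 hi), recordEdge_self]; ring
  rw [recordEdge_dotProduct, sum_congr rfl h, sum_const, Fin.card_Iio, nsmul_eq_mul]

lemma recordEdge_dotProduct_of_lt {i j : Fin n} (hij : i < j) :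
    recordEdge i ⬝ᵥ recordEdge j = 0 := by
  rw [recordEdge_dotProduct]
  refine sum_eq_zero fun k hk => ?_
  rw [recordEdge_of_lt ((mem_Iio.1 hk).trans hij), recordEdge_of_lt hij, sub_self]

lemma pairwise_recordEdge_dotProduct_eq_zero :
    Pairwise fun i j : Fin n => recordEdge i ⬝ᵥ recordEdge j = 0 := fun i j hij => by
  rcases hij.lt_or_gt with h | h
  · exact recordEdge_dotProduct_of_lt h
  · rw [dotProduct_comm, recordEdge_dotProduct_of_lt h]

lemma eq_of_recordEdge_dotProduct_eq_zero {y : Fin n → ℝ} (hy : ∀ j, recordEdge j ⬝ᵥ y = 0)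
    (i j : Fin n) : y i = y j := by
  have key : ∀ j, ∀ i < j, y i = y j := by
    intro j
    induction j using WellFoundedLT.induction with
    | _ j ih =>
      intro i hi
      have hconst : ∀ l ∈ Iio j, y l - y j = y i - y j := fun l hl => by
        rcases lt_trichotomy l i with h | rfl | h
        · rw [ih i hi l h]
        · rfl
        · rw [ih l (mem_Iio.1 hl) i h]
      have hsum := hy j
      rw [recordEdge_dotProduct, sum_congr rfl hconst, sum_const, Fin.card_Iio, nsmul_eq_mul,
        mul_eq_zero, Nat.cast_eq_zero] at hsum
      exact sub_eq_zero.1 (hsum.resolve_left (by omega))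
  rcases lt_trichotomy i j with h | rfl | h
  exacts [key j i h, rfl, (key i j h).symm]

lemma eq_zero_of_sum_eq_zero_of_recordEdge_dotProduct_eq_zero {y : Fin n → ℝ}
    (hsum : ∑ i, y i = 0) (hy : ∀ j, recordEdge j ⬝ᵥ y = 0) : y = 0 := by
  ext j
  have hn : (n : ℝ) ≠ 0 := Nat.cast_ne_zero.2 j.pos.ne'
  simpa [sum_congr rfl fun i _ => eq_of_recordEdge_dotProduct_eq_zero hy i j, hn] using hsum

lemma eq_sum_projections_recordEdge {y : Fin n → ℝ} (hy : ∑ i, y i = 0) :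
    y = ∑ j, (recordEdge j ⬝ᵥ y / recordEdge j ⬝ᵥ recordEdge j) • recordEdge j := by
  rw [← sub_eq_zero]
  refine eq_zero_of_sum_eq_zero_of_recordEdge_dotProduct_eq_zero ?_
    (dotProduct_sub_sum_projections_eq_zero pairwise_recordEdge_dotProduct_eq_zero y)
  rw [← dotProduct_one] at hy ⊢
  simp only [sub_dotProduct, sum_dotProduct, smul_dotProduct, recordEdge_dotProduct_one, hy,
    smul_zero, sum_const_zero, sub_zero]

lemma mem_parallelepiped_recordEdge {y : Fin n → ℝ} (hy : ∑ i, y i = 0)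
    (hnonneg : ∀ j, 0 ≤ recordEdge j ⬝ᵥ y)
    (hle : ∀ j, recordEdge j ⬝ᵥ y ≤ recordEdge j ⬝ᵥ recordEdge j) :
    y ∈ parallelepiped (recordEdge (n := n)) := by
  have hself (j : Fin n) : 0 ≤ recordEdge j ⬝ᵥ recordEdge j := (hnonneg j).trans (hle j)
  exact (mem_parallelepiped_iff _ _).2 ⟨_, ⟨fun j => div_nonneg (hnonneg j) (hself j),
    fun j => div_le_one_of_le₀ (hle j) (hself j)⟩, eq_sum_projections_recordEdge hy⟩

end RecordEdge

section Slabs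

variable {n : ℕ}

/-- The polytope cut out of the hyperplane `∑ xᵢ = n(n+1)/2` by the slabs orthogonal to the vectors
`recordEdge j`. The slab for `j = 0` is the whole space. -/
def recordSlabs (n : ℕ) : Set (Fin n → ℝ) :=
  {x | ∑ i, x i = n * (n + 1) / 2 ∧ ∀ j : Fin n, |recordEdge j ⬝ᵥ x| ≤ j * (j + 1) / 2}

lemma recordSlabs_eq_setOf_prefix_sums (n : ℕ) :
    recordSlabs n = {x : Fin n → ℝ | ∑ i, x i = n * (n + 1) / 2 ∧ ∀ j : Fin n, 1 ≤ (j : ℕ) →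
      |(∑ i with i < j, x i) - (j : ℕ) * x j| ≤ (j : ℕ) * ((j : ℕ) + 1) / 2} := by
  ext x
  refine and_congr_right fun _ => forall_congr' fun j => ?_
  rw [recordEdge_dotProduct, sum_sub_distrib, sum_const, Fin.card_Iio, nsmul_eq_mul,
    filter_gt_eq_Iio]
  rcases Nat.eq_zero_or_pos (j : ℕ) with hj | hj
  · have : Iio j = ∅ := by rw [← card_eq_zero, Fin.card_Iio, hj]
    simp [hj, this]
  · exact ⟨fun h _ => h, fun h => h hj⟩

lemma convex_recordSlabs : Convex ℝ (recordSlabs n) := by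
  have hpreimage : recordSlabs n =
      dotProductBilin ℝ ℝ (1 : Fin n → ℝ) ⁻¹' {(n * (n + 1) / 2 : ℝ)} ∩
        ⋂ j : Fin n, dotProductBilin ℝ ℝ (recordEdge j) ⁻¹'
          Set.Icc (-(j * (j + 1) / 2)) (j * (j + 1) / 2) := by
    ext x
    simp [recordSlabs, abs_le, dotProductBilin, one_dotProduct]
  rw [hpreimage]
  exact ((convex_singleton _).linear_preimage _).inter
    (convex_iInter fun j => (convex_Icc _ _).linear_preimage _)

lemma sum_permPoint (σ : Equiv.Perm (Fin n)) : ∑ i, permPoint σ i = n * (n + 1) / 2 := by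
  have hgauss : ∀ m : ℕ, ∑ k ∈ range m, ((k : ℝ) + 1) = m * (m + 1) / 2 := fun m => by
    induction m with
    | zero => simp
    | succ m ih => rw [sum_range_succ, ih]; push_cast; ring
  simp only [permPoint]
  rw [Equiv.sum_comp σ fun i => ((i : ℕ) : ℝ) + 1,
    Fin.sum_univ_eq_sum_range fun k => (k : ℝ) + 1, hgauss]

lemma recordEdge_dotProduct_permPoint (j : Fin n) (σ : Equiv.Perm (Fin n)) :
    recordEdge j ⬝ᵥ permPoint σ = ∑ y ∈ (Iic j).map σ.toEmbedding, ((y : ℝ) - σ j) := by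
  rw [recordEdge_dotProduct, sum_map, ← Iio_insert, sum_insert (by simp)]
  simp [permPoint]

lemma recordEdge_dotProduct_permPoint_one (j : Fin n) :
    recordEdge j ⬝ᵥ permPoint 1 = -(j * (j + 1) / 2) := by
  have hsum : recordEdge j ⬝ᵥ permPoint 1 = ∑ k ∈ Icc 0 (j : ℕ), ((k : ℝ) - j) := by
    rw [recordEdge_dotProduct_permPoint, sum_map, ← Nat.bot_eq_zero, Icc_bot,
      ← Fin.map_valEmbedding_Iic, sum_map]
    rfl
  have htwice := sum_Icc_natCast_sub_mul_two (Nat.zero_le j) (j : ℝ)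
  push_cast at htwice
  linarith

lemma AllEntriesRecords.permPoint_mem_recordSlabs {σ : Equiv.Perm (Fin n)}
    (hσ : AllEntriesRecords σ) : permPoint σ ∈ recordSlabs n := by
  refine ⟨sum_permPoint σ, fun j => ?_⟩
  obtain ⟨a, b, hb, hmap⟩ := hσ.exists_map_Iic_eq_Icc j
  obtain ⟨haj, hjb⟩ : a ≤ σ j ∧ σ j ≤ b := by
    rw [← mem_Icc, ← hmap]
    exact mem_map_of_mem _ (mem_Iic.2 le_rfl)
  have hba : (b : ℝ) - a = j := by rw [hb]; push_cast; ring
  rw [recordEdge_dotProduct_permPoint, hmap, sum_Icc_fin a b fun k => (k : ℝ) - σ j, ← hba]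
  exact abs_sum_Icc_natCast_sub_le haj hjb

lemma P132312_subset_recordSlabs : P132312 n ⊆ recordSlabs n := by
  refine convexHull_min ?_ convex_recordSlabs
  rintro _ ⟨σ, hσ, rfl⟩
  exact (avoids_p132_p312_iff.1 hσ).permPoint_mem_recordSlabs

lemma recordSlabs_subset_vadd_parallelepiped :
    recordSlabs n ⊆ permPoint (1 : Equiv.Perm (Fin n)) +ᵥ parallelepiped (recordEdge (n := n)) := by
  rintro x ⟨hsum, hslab⟩
  rw [Set.mem_vadd_set_iff_neg_vadd_mem, vadd_eq_add, neg_add_eq_sub]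
  have hdot (j : Fin n) : recordEdge j ⬝ᵥ (x - permPoint 1)
      = recordEdge j ⬝ᵥ x + j * (j + 1) / 2 := by
    rw [dotProduct_sub, recordEdge_dotProduct_permPoint_one, sub_neg_eq_add]
  refine mem_parallelepiped_recordEdge ?_ (fun j => ?_) fun j => ?_
  · simp [hsum, sum_permPoint]
  · linarith [hdot j, (abs_le.1 (hslab j)).1]
  · linarith [hdot j, (abs_le.1 (hslab j)).2, recordEdge_dotProduct_self j]

end Slabs

section Vertices

variable {n : ℕ}

/-- The position `k` with its sign changed when `k ∈ D`: in the sequence of these integers the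
entries in `D` are left-to-right minima and all others are left-to-right maxima. -/
def signedPosition (D : Finset (Fin n)) (k : Fin n) : ℤ :=
  if k ∈ D then -(k : ℤ) else k

/-- The standardization of `signedPosition D`, that is, the permutation with the same relative
order. -/
def recordPerm (D : Finset (Fin n)) : Equiv.Perm (Fin n) :=
  (Tuple.sort (signedPosition D)).symm

variable {D : Finset (Fin n)} {k l : Fin n}

lemma signedPosition_lt_iff_of_lt (h : l < k) :
    signedPosition D l < signedPosition D k ↔ k ∉ D := by
  unfold signedPosition
  split_ifs <;> simp_all <;> omega

lemma signedPosition_lt_iff_of_gt (h : k < l) :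
    signedPosition D l < signedPosition D k ↔ l ∈ D := by
  unfold signedPosition
  split_ifs <;> simp_all <;> omega

lemma signedPosition_injective : Function.Injective (signedPosition D) := by
  refine Function.Injective.of_lt_imp_ne fun _ k h => ?_
  by_cases hk : k ∈ D
  · exact ((signedPosition_lt_iff_of_gt h).2 hk).ne'
  · exact ((signedPosition_lt_iff_of_lt h).2 hk).ne

lemma recordPerm_lt_iff_of_lt (h : l < k) : recordPerm D l < recordPerm D k ↔ k ∉ D :=
  (sort_symm_lt_sort_symm_iff signedPosition_injective).trans (signedPosition_lt_iff_of_lt h)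

lemma recordPerm_lt_iff_of_gt (h : k < l) : recordPerm D l < recordPerm D k ↔ l ∈ D :=
  (sort_symm_lt_sort_symm_iff signedPosition_injective).trans (signedPosition_lt_iff_of_gt h)

lemma allEntriesRecords_recordPerm : AllEntriesRecords (recordPerm D) := by
  intro k
  by_cases hk : k ∈ D
  · exact Or.inr fun _ hl => (recordPerm_lt_iff_of_gt hl).2 hk
  · exact Or.inl fun _ hl => (recordPerm_lt_iff_of_lt hl).2 hk

lemma recordPerm_apply_val :
    (recordPerm D k : ℕ) = (if k ∈ D then 0 else (k : ℕ)) + #{l ∈ D | k < l} := by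
  have hsplit : ({l | recordPerm D l < recordPerm D k} : Finset (Fin n))
      = (if k ∈ D then ∅ else Iio k) ∪ {l ∈ D | k < l} := by
    ext l
    simp only [mem_filter, mem_univ, true_and, mem_union]
    rcases lt_trichotomy l k with h | rfl | h
    · split_ifs <;> simp [recordPerm_lt_iff_of_lt h, *, h.not_gt]
    · split_ifs <;> simp
    · split_ifs <;> simp [recordPerm_lt_iff_of_gt h, h, h.not_gt]
  have hdisj : Disjoint (if k ∈ D then ∅ else Iio k) {l ∈ D | k < l} := by
    split_ifs
    · exact disjoint_empty_left _
    · exact disjoint_left.2 fun _ hl hl' => (mem_Iio.1 hl).not_gt (mem_filter.1 hl').2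
  rw [← card_filter_perm_lt, hsplit, card_union_of_disjoint hdisj, apply_ite card, card_empty,
    Fin.card_Iio]

lemma permPoint_recordPerm :
    permPoint (recordPerm D) = permPoint 1 + ∑ j ∈ D, recordEdge j := by
  ext k
  simp only [permPoint, recordPerm_apply_val, Pi.add_apply, Finset.sum_apply, recordEdge,
    sum_sub_distrib, sum_boole, sum_ite_eq, Equiv.Perm.one_apply]
  split_ifs <;> push_cast <;> ring

lemma vadd_parallelepiped_subset_P132312 :
    permPoint (1 : Equiv.Perm (Fin n)) +ᵥ parallelepiped (recordEdge (n := n)) ⊆ P132312 n := by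
  classical
  rw [parallelepiped_eq_convexHull, ← convexHull_vadd]
  refine convexHull_mono ?_
  rintro _ ⟨y, hy, rfl⟩
  obtain ⟨u, hu, rfl⟩ := (Set.mem_fintype_sum _ _).1 hy
  refine ⟨recordPerm {j | u j ≠ 0}, avoids_p132_p312_iff.2 allEntriesRecords_recordPerm, ?_⟩
  have hedge (j : Fin n) : (if u j ≠ 0 then recordEdge j else 0) = u j := by
    split_ifs with h0
    · exact (Or.resolve_left (hu j) h0).symm
    · exact (not_not.1 h0).symm
  simp only [permPoint_recordPerm, sum_filter, hedge, vadd_eq_add]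

end Vertices

theorem P132312_eq_recordSlabs (n : ℕ) : P132312 n = recordSlabs n :=
  P132312_subset_recordSlabs.antisymm
    (recordSlabs_subset_vadd_parallelepiped.trans vadd_parallelepiped_subset_P132312)

theorem P132312_eq_vadd_parallelepiped (n : ℕ) :
    P132312 n = permPoint (1 : Equiv.Perm (Fin n)) +ᵥ parallelepiped (recordEdge (n := n)) :=
  (P132312_subset_recordSlabs.trans recordSlabs_subset_vadd_parallelepiped).antisymm
    vadd_parallelepiped_subset_P132312

theorem stmt2 (n : ℕ) (hn : 1 ≤ n) :
    P132312 n = {x : Fin n → ℝ |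
      (∑ i, x i) = (n : ℝ) * (n + 1) / 2 ∧
      ∀ j : Fin n, 1 ≤ (j : ℕ) →
        |(∑ i ∈ Finset.univ.filter (fun i : Fin n => i < j), x i) - (j : ℕ) * x j| ≤
          (j : ℕ) * ((j : ℕ) + 1) / 2} ∧
    ∃ (b : Fin n → ℝ) (v : Fin (n - 1) → Fin n → ℝ),
      (∀ i, v i ≠ 0) ∧
      (∀ i j, i ≠ j → ∑ m, v i m * v j m = 0) ∧
      P132312 n =
        {x | ∃ t : Fin (n - 1) → ℝ, (∀ i, t i ∈ Set.Icc (0 : ℝ) 1) ∧ x = b + ∑ i, t i • v i} := by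
  obtain ⟨m, rfl⟩ : ∃ m, n = m + 1 := ⟨n - 1, by omega⟩
  refine ⟨?_, permPoint 1, fun i => recordEdge i.succ,
    fun i => recordEdge_ne_zero (Fin.succ_ne_zero i),
    fun i j hij => pairwise_recordEdge_dotProduct_eq_zero ((Fin.succ_injective m).ne hij), ?_⟩
  · rw [P132312_eq_recordSlabs, recordSlabs_eq_setOf_prefix_sums]
  · rw [P132312_eq_vadd_parallelepiped, parallelepiped_eq_parallelepiped_succ recordEdge_zero,
      vadd_parallelepiped_eq_setOf]
    rfl
end

section
/- For all n ≥ 2: (a) the number of lattice points in P_n(123,132) is the Catalan number C_n = binom(2n,n)/(n+1), i.e. |P_n(123,132) ∩ ℤ^n| = C_n; and (b) lim_{m→∞} |m·P_n(123,132) ∩ ℤ^n| / m^{n−1} = n^{n−2}/(n−1)! (equivalently, the normalized volume of the (n−1)-dimensional polytope P_n(123,132) is n^{n−2}). -/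
open Pointwise

/-- The pattern 123. -/
def p123 : Equiv.Perm (Fin 3) := 1
/-- The polytope `P_n(123,132)`. -/
def P123132 (n : ℕ) : Set (Fin n → ℝ) :=
  convexHull ℝ (permPoint ''
    {σ : Equiv.Perm (Fin n) | ¬ containsPattern σ p123 ∧ ¬ containsPattern σ p132})

/-!
Subtracting a point of the `m`-th dilate from `m • (n, n - 1, …, 1)` gives the steps of a walk that
starts and ends at height `0`, never goes below it and climbs by at most `m` in each step. Indeed,
all walks are convex combinations of those whose steps either climb by `m` or fall to height `0`,
since any other step can be traded against the fall that comes next. For `m = 1` these extremal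
walks encode the avoiding permutations: `123` and `132` are avoided when each entry is the largest
or the second largest of the values still available, the former being a fall to `0` and the latter
a climb. Hence the lattice points of the dilate are the integer walks. Sorting these by their first
step leads to the recurrence of the Raney numbers, so that there are
`((m + 1) * n).choose (n - 1) / n` of them: the Catalan number for `m = 1`, and a polynomial in `m`
with leading coefficient `n ^ (n - 2) / (n - 1)!`.
-/

open Filter Topology

section Cons

variable {M : Type*} {n : ℕ}

theorem cons_add_cons [Add M] (x y : M) (a b : Fin n → M) :
    (Fin.cons x a + Fin.cons y b : Fin (n + 1) → M) = Fin.cons (x + y) (a + b) := by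
  ext i
  cases i using Fin.cases <;> rfl

theorem smul_cons {R : Type*} [SMul R M] (r : R) (x : M) (a : Fin n → M) :
    (r • Fin.cons x a : Fin (n + 1) → M) = Fin.cons (r • x) (r • a) := by
  ext i
  cases i using Fin.cases <;> rfl

variable [AddCommMonoid M]

theorem sum_Iic_zero (a : Fin (n + 1) → M) : ∑ j ≤ 0, a j = a 0 := by
  have hIic : Finset.Iic (0 : Fin (n + 1)) = {0} := Finset.Iic_bot
  simp only [hIic, Finset.sum_singleton]

theorem sum_Iic_succ (a : Fin (n + 1) → M) (i : Fin n) :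
    ∑ j ≤ i.succ, a j = a 0 + ∑ j ≤ i, a j.succ := by
  have hIic : Finset.Iic i.succ = Finset.cons 0 (Finset.Ioc 0 i.succ) (by simp) := by
    ext j; simp
  simp [hIic, ← Fin.map_succEmb_Iic]

end Cons

section Walks

variable {R : Type*} [AddCommMonoid R] [LE R] {n : ℕ} {m d s : R} {a : Fin n → R}

/-- The walks with `n` steps that lead from height `d` to height `0`, stay at nonnegative heights
and climb by at most `m` in each step. A walk is recorded by its sequence of steps. -/
def walks (n : ℕ) (m d : R) : Set (Fin n → R) :=
  {a | (∀ i, a i ≤ m) ∧ (∀ i, 0 ≤ d + ∑ j ≤ i, a j) ∧ d + ∑ j, a j = 0}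

/-- The walks in which every step either climbs by the full `m` or falls to height `0`. -/
def extremalWalks (n : ℕ) (m d : R) : Set (Fin n → R) :=
  {a ∈ walks n m d | ∀ i, a i = m ∨ d + ∑ j ≤ i, a j = 0}

theorem cons_mem_walks :
    (Fin.cons s a : Fin (n + 1) → R) ∈ walks (n + 1) m d ↔
      s ≤ m ∧ 0 ≤ d + s ∧ a ∈ walks n m (d + s) := by
  simp only [walks, Set.mem_ofPred_eq, Fin.forall_fin_succ, sum_Iic_zero, sum_Iic_succ,
    Fin.sum_univ_succ, Fin.cons_zero, Fin.cons_succ, ← add_assoc]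
  tauto

theorem cons_mem_extremalWalks :
    (Fin.cons s a : Fin (n + 1) → R) ∈ extremalWalks (n + 1) m d ↔
      s ≤ m ∧ 0 ≤ d + s ∧ (s = m ∨ d + s = 0) ∧ a ∈ extremalWalks n m (d + s) := by
  simp only [extremalWalks, Set.mem_ofPred_eq, cons_mem_walks, Fin.forall_fin_succ, sum_Iic_zero,
    sum_Iic_succ, Fin.cons_zero, Fin.cons_succ, ← add_assoc]
  tauto

theorem mem_walks_zero {a : Fin 0 → R} : a ∈ walks 0 m d ↔ d = 0 := by
  simp [walks]

theorem mem_extremalWalks_zero {a : Fin 0 → R} : a ∈ extremalWalks 0 m d ↔ d = 0 := by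
  simp [extremalWalks, mem_walks_zero]

end Walks

section Convexity

variable {𝕜 : Type*} [Field 𝕜] [LinearOrder 𝕜] [IsStrictOrderedRing 𝕜] {n : ℕ} {m d : 𝕜}

theorem convex_walks : Convex 𝕜 (walks n m d) := by
  rintro a ⟨ha, ha', ha''⟩ b ⟨hb, hb', hb''⟩ s t hs ht hst
  have total (S : Finset (Fin n)) : d + ∑ j ∈ S, (s • a + t • b) j =
      s * (d + ∑ j ∈ S, a j) + t * (d + ∑ j ∈ S, b j) := by
    simp only [Pi.add_apply, Pi.smul_apply, smul_eq_mul, Finset.sum_add_distrib, ← Finset.mul_sum]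
    linear_combination -d * hst
  refine ⟨fun i ↦ ?_, fun i ↦ ?_, ?_⟩
  · exact (convex_Iic m) (ha i) (hb i) hs ht hst
  · rw [total]
    exact add_nonneg (mul_nonneg hs (ha' i)) (mul_nonneg ht (hb' i))
  · rw [total, ha'', hb'', mul_zero, mul_zero, add_zero]

theorem smul_mem_walks_iff {r : 𝕜} (hr : 0 < r) {a : Fin n → 𝕜} :
    r • a ∈ walks n (r * m) (r * d) ↔ a ∈ walks n m d := by
  simp only [walks, Set.mem_ofPred_eq, Pi.smul_apply, smul_eq_mul, ← Finset.mul_sum, ← mul_add,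
    mul_le_mul_iff_right₀ hr, mul_nonneg_iff_of_pos_left hr, mul_eq_zero, hr.ne', false_or]

/-- The direction `v` is the unit vector at the first fall: what precedes it consists of climbs and
what follows it starts from height `0`, so changing the starting height only changes this fall. -/
theorem exists_forall_add_smul_mem_extremalWalks (hm : 0 ≤ m) (hd : 0 < d) {a : Fin n → 𝕜}
    (ha : a ∈ extremalWalks n m d) :
    ∃ v : Fin n → 𝕜, ∀ t ≥ 0, a + (d - t) • v ∈ extremalWalks n m t := by
  induction n generalizing d with
  | zero => exact absurd (mem_extremalWalks_zero.1 ha) hd.ne'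
  | succ n ih =>
    cases a using Fin.consCases with | _ s b
    obtain ⟨-, -, rfl | hfall, hb⟩ := cons_mem_extremalWalks.1 ha
    · obtain ⟨v, hv⟩ := ih (by positivity) hb
      refine ⟨Fin.cons 0 v, fun t ht ↦ ?_⟩
      rw [smul_cons, cons_add_cons, smul_zero, add_zero, cons_mem_extremalWalks]
      refine ⟨le_rfl, by positivity, Or.inl rfl, ?_⟩
      simpa using hv (t + s) (by positivity)
    · refine ⟨Fin.cons 1 0, fun t ht ↦ ?_⟩
      have hstep : s + (d - t) = -t := by linear_combination hfall
      rw [hfall] at hb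
      rw [smul_cons, cons_add_cons, smul_eq_mul, mul_one, smul_zero, add_zero,
        cons_mem_extremalWalks, hstep, add_neg_cancel]
      exact ⟨by linarith, le_rfl, Or.inr rfl, hb⟩

theorem cons_mem_convexHull_extremalWalks (hm : 0 ≤ m) (hd : 0 ≤ d) {s : 𝕜} {a : Fin n → 𝕜}
    (hsm : s ≤ m) (hds : 0 ≤ d + s) (ha : a ∈ extremalWalks n m (d + s)) :
    (Fin.cons s a : Fin (n + 1) → 𝕜) ∈ convexHull 𝕜 (extremalWalks (n + 1) m d) := by
  rcases hds.eq_or_lt with hfall | hpos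
  · exact subset_convexHull 𝕜 _ (cons_mem_extremalWalks.2 ⟨hsm, hds, Or.inr hfall.symm, ha⟩)
  obtain ⟨v, hv⟩ := exists_forall_add_smul_mem_extremalWalks hm hpos ha
  have hfall : (Fin.cons (-d) (a + (d + s) • v) : Fin (n + 1) → 𝕜) ∈ extremalWalks (n + 1) m d := by
    rw [cons_mem_extremalWalks, add_neg_cancel]
    exact ⟨by linarith, le_rfl, Or.inr rfl, by simpa using hv 0 le_rfl⟩
  have hclimb : (Fin.cons m (a + (s - m) • v) : Fin (n + 1) → 𝕜) ∈ extremalWalks (n + 1) m d := by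
    rw [cons_mem_extremalWalks]
    exact ⟨le_rfl, by positivity, Or.inl rfl, by simpa using hv (d + m) (by positivity)⟩
  have hdm : 0 < d + m := by linarith
  have hcomb : (Fin.cons s a : Fin (n + 1) → 𝕜) =
      ((m - s) / (d + m)) • (Fin.cons (-d) (a + (d + s) • v) : Fin (n + 1) → 𝕜) +
        ((d + s) / (d + m)) • (Fin.cons m (a + (s - m) • v) : Fin (n + 1) → 𝕜) := by
    rw [smul_cons, smul_cons, cons_add_cons]
    congr 1
    · simp only [smul_eq_mul]
      field_simp
      ring
    · ext i
      simp only [Pi.add_apply, Pi.smul_apply, smul_eq_mul]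
      field_simp
      ring
  rw [hcomb]
  exact convex_convexHull 𝕜 _ (subset_convexHull 𝕜 _ hfall) (subset_convexHull 𝕜 _ hclimb)
    (div_nonneg (by linarith) hdm.le) (div_nonneg hds hdm.le) (by field_simp; ring)

theorem walks_eq_convexHull (hm : 0 ≤ m) (hd : 0 ≤ d) :
    walks n m d = convexHull 𝕜 (extremalWalks n m d) := by
  refine (convexHull_min (fun a ha ↦ ha.1) convex_walks).antisymm' fun a ha ↦ ?_
  induction n generalizing d with
  | zero => exact subset_convexHull 𝕜 _ (mem_extremalWalks_zero.2 (mem_walks_zero.1 ha))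
  | succ n ih =>
    cases a using Fin.consCases with | _ s b
    obtain ⟨hsm, hds, hb⟩ := cons_mem_walks.1 ha
    have hconvex : Convex 𝕜 {c | (Fin.cons s c : Fin (n + 1) → 𝕜) ∈
        convexHull 𝕜 (extremalWalks (n + 1) m d)} := by
      intro x hx y hy r t hr ht hrt
      have := convex_convexHull 𝕜 _ hx hy hr ht hrt
      rwa [smul_cons, smul_cons, cons_add_cons, ← add_smul, hrt, one_smul] at this
    exact convexHull_min (fun c ↦ cons_mem_convexHull_extremalWalks hm hd hsm hds) hconvex
      (ih hds b hb)

end Convexity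

section Counting

/-- The Raney number, the coefficient of `zⁿ` in the `x`-th power of the power series solution `B`
of `B = 1 + z * B ^ c`. The formula gives the junk value `0` when `x = n = 0`. -/
def raney (c n x : ℕ) : ℚ :=
  x / (x + c * n) * (x + c * n).choose n

theorem raney_eq {c n x N : ℕ} (hN : x + c * n = N) : raney c n x = x / N * N.choose n := by
  rw [← hN, raney]
  push_cast
  rfl

theorem raney_zero_right (c n : ℕ) : raney c n 0 = 0 := by
  simp [raney]

theorem raney_succ_succ (c n x : ℕ) (hc : 0 < c) :
    raney c (n + 1) (x + 1) = raney c (n + 1) x + raney c n (x + c) := by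
  obtain ⟨N, hN⟩ : ∃ N : ℕ, N = x + c * (n + 1) := ⟨_, rfl⟩
  have hnN : n ≤ N := by nlinarith
  have hNpos : (N : ℚ) ≠ 0 := by
    have : 0 < N := by rw [hN]; positivity
    positivity
  have hsucc : ((N + 1).choose (n + 1) : ℚ) = (N + 1) / (n + 1) * N.choose n := by
    have := congrArg (Nat.cast (R := ℚ)) (Nat.add_one_mul_choose_eq N n)
    push_cast at this
    field_simp
    linarith
  have hright : (N.choose (n + 1) : ℚ) = (N - n) / (n + 1) * N.choose n := by
    have := congrArg (Nat.cast (R := ℚ)) (Nat.choose_succ_right_eq N n)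
    push_cast [hnN] at this
    field_simp
    linarith
  have hNq : (N : ℚ) = x + c * (n + 1) := by rw [hN]; push_cast; ring
  rw [raney_eq (N := N + 1) (by rw [hN]; ring), raney_eq hN.symm,
    raney_eq (N := N) (by rw [hN]; ring), hsucc, hright]
  push_cast
  field_simp
  rw [hNq]
  ring

theorem sum_raney (c n x : ℕ) (hc : 0 < c) :
    ∑ e ∈ Finset.range x, raney c n (e + c) = raney c (n + 1) x := by
  induction x with
  | zero => rw [Finset.sum_range_zero, raney_zero_right]
  | succ x ih => rw [Finset.sum_range_succ, ih, raney_succ_succ c n x hc]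

theorem walks_succ_eq_iUnion (n m d : ℕ) :
    walks (n + 1) (m : ℤ) d =
      ⋃ e : Fin (d + m + 1), Fin.cons (e - d : ℤ) '' walks n (m : ℤ) (e : ℕ) := by
  ext a
  cases a using Fin.consCases with | _ s b
  simp only [cons_mem_walks, Set.mem_iUnion, Set.mem_image, Fin.cons_inj]
  constructor
  · rintro ⟨hsm, hds, hb⟩
    obtain ⟨e, he⟩ := Int.eq_ofNat_of_zero_le hds
    exact ⟨⟨e, by omega⟩, b, by rwa [← he], by simp [← he], rfl⟩
  · rintro ⟨e, b, hb, rfl, rfl⟩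
    exact ⟨by omega, by omega, by rwa [add_sub_cancel]⟩

theorem finite_walks (n m d : ℕ) : (walks n (m : ℤ) d).Finite := by
  induction n generalizing d with
  | zero => exact Set.toFinite _
  | succ n ih =>
    rw [walks_succ_eq_iUnion]
    exact Set.finite_iUnion fun e ↦ (ih e).image _

theorem ncard_walks_succ (n m d : ℕ) :
    (walks (n + 1) (m : ℤ) d).ncard =
      ∑ e ∈ Finset.range (d + m + 1), (walks n (m : ℤ) e).ncard := by
  rw [walks_succ_eq_iUnion, Set.ncard_iUnion_of_finite, finsum_eq_sum_of_fintype,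
    Finset.sum_range]
  · exact Finset.sum_congr rfl fun e _ ↦
      Set.ncard_image_of_injective _ (Fin.cons_right_injective _)
  · exact fun e ↦ (finite_walks n m e).image _
  · intro e f hef
    refine Set.disjoint_left.2 ?_
    rintro _ ⟨a, -, rfl⟩ ⟨b, -, hab⟩
    have := (Fin.cons_inj.1 hab).1
    exact hef (Fin.ext (by omega))

theorem ncard_walks_zero (m d : ℕ) : (walks 0 (m : ℤ) d).ncard = if d = 0 then 1 else 0 := by
  have hwalks : walks 0 (m : ℤ) d = {_a | d = 0} := by
    ext a
    simp [mem_walks_zero]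
  rw [hwalks]
  split_ifs with hd <;> simp [hd]

theorem ncard_walks (n m d : ℕ) :
    ((walks (n + 1) (m : ℤ) d).ncard : ℚ) = raney (m + 1) n (d + m + 1) := by
  induction n generalizing d with
  | zero =>
    have hcount : (walks 1 (m : ℤ) d).ncard = 1 := by simp [ncard_walks_succ, ncard_walks_zero]
    rw [hcount, raney_eq (N := d + m + 1) (by ring)]
    push_cast
    field_simp
    simp
  | succ n ih =>
    rw [ncard_walks_succ, Nat.cast_sum, ← sum_raney _ _ _ m.succ_pos]
    exact Finset.sum_congr rfl fun e _ ↦ ih e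

theorem succ_mul_ncard_walks (n m : ℕ) :
    (n + 1) * (walks (n + 1) (m : ℤ) 0).ncard = ((m + 1) * (n + 1)).choose n := by
  have h := ncard_walks n m 0
  have hraney : ((n : ℚ) + 1) * raney (m + 1) n (m + 1) = ((m + 1) * (n + 1)).choose n := by
    rw [raney, show m + 1 + (m + 1) * n = (m + 1) * (n + 1) by ring]
    push_cast
    field_simp
    ring
  rw [zero_add, Nat.cast_zero] at h
  rw [← h] at hraney
  exact_mod_cast hraney

theorem succ_mul_catalan_succ (n : ℕ) :
    (n + 1) * catalan (n + 1) = (2 * (n + 1)).choose n := by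
  have hcatalan := succ_mul_catalan_eq_centralBinom (n + 1)
  have hchoose := Nat.choose_succ_right_eq (2 * (n + 1)) n
  rw [Nat.centralBinom_eq_two_mul_choose] at hcatalan
  rw [← hcatalan, show 2 * (n + 1) - n = n + 2 by omega] at hchoose
  refine Nat.eq_of_mul_eq_mul_right (Nat.succ_pos (n + 1)) ?_
  linarith

theorem tendsto_choose_succ_mul_div_pow {c : ℕ} (hc : 0 < c) (k : ℕ) :
    Tendsto (fun m : ℕ ↦ (((m + 1) * c).choose k : ℝ) / (m : ℝ) ^ k) atTop
      (𝓝 ((c : ℝ) ^ k / k.factorial)) := by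
  have hatTop : Tendsto (fun m : ℕ ↦ (m + 1) * c) atTop atTop :=
    (tendsto_add_atTop_nat 1).atTop_mul_const' hc
  have hequiv := ((isEquivalent_choose k).comp_tendsto hatTop).div
    (Asymptotics.IsEquivalent.refl (u := fun m : ℕ ↦ (m : ℝ) ^ k))
  refine hequiv.symm.tendsto_nhds ?_
  have hratio : Tendsto (fun m : ℕ ↦ ((m : ℝ) + 1) / m) atTop (𝓝 1) := by
    simpa using (tendsto_natCast_div_add_atTop (1 : ℝ)).inv₀ one_ne_zero
  have hpow := ((hratio.mul_const (c : ℝ)).pow k).div_const (k.factorial : ℝ)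
  rw [one_mul] at hpow
  refine hpow.congr fun m ↦ ?_
  simp only [Pi.div_apply, Function.comp_apply, Nat.cast_mul, Nat.cast_add, Nat.cast_one]
  rw [div_mul_eq_mul_div, div_pow, div_right_comm]

end Counting

section Arrangements

variable {α : Type*} [Preorder α] {n : ℕ}

/-- The sequences that list each element of `S` once and in which every entry is exceeded by at
most one later entry, that is, in which `123` and `132` do not occur. -/
def avoidingArrangements (n : ℕ) (S : Set α) : Set (Fin n → α) :=
  {v | Function.Injective v ∧ Set.range v = S ∧ ∀ i, {j | i < j ∧ v i < v j}.Subsingleton}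

theorem mem_avoidingArrangements_zero {S : Set α} {v : Fin 0 → α} :
    v ∈ avoidingArrangements 0 S ↔ S = ∅ := by
  simp [avoidingArrangements, Function.injective_of_subsingleton, eq_comm]

theorem subsingleton_setOf_lt_iff {S : Set α} {s : α} {v : Fin n → α}
    (hv : Function.Injective v) (hS : Set.range v = S \ {s}) :
    {j | s < v j}.Subsingleton ↔ {t ∈ S | s < t}.Subsingleton := by
  have himage : {t ∈ S | s < t} = v '' {j | s < v j} := by
    ext t
    have := Set.ext_iff.1 hS t
    constructor
    · rintro ⟨ht, hst⟩
      obtain ⟨j, rfl⟩ := this.2 ⟨ht, hst.ne'⟩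
      exact ⟨j, hst, rfl⟩
    · rintro ⟨j, hj, rfl⟩
      exact ⟨(this.1 ⟨j, rfl⟩).1, hj⟩
  rw [himage]
  exact ⟨fun h ↦ h.image v, fun h ↦ Set.subsingleton_of_image hv _ h⟩

theorem cons_mem_avoidingArrangements {S : Set α} {s : α} {v : Fin n → α} :
    (Fin.cons s v : Fin (n + 1) → α) ∈ avoidingArrangements (n + 1) S ↔
      (s ∈ S ∧ {t ∈ S | s < t}.Subsingleton) ∧ v ∈ avoidingArrangements n (S \ {s}) := by
  have hzero : {j | 0 < j ∧ s < (Fin.cons s v : Fin (n + 1) → α) j} =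
      Fin.succ '' {j | s < v j} := by
    ext j
    cases j using Fin.cases <;> simp
  have hsucc (i : Fin n) : {j | i.succ < j ∧ v i < (Fin.cons s v : Fin (n + 1) → α) j} =
      Fin.succ '' {j | i < j ∧ v i < v j} := by
    ext j
    cases j using Fin.cases <;> simp
  have hsub {A : Set (Fin n)} : (Fin.succ '' A).Subsingleton ↔ A.Subsingleton :=
    ⟨fun h ↦ Set.subsingleton_of_image (Fin.succ_injective n) A h, fun h ↦ h.image _⟩
  have hrange : insert s (Set.range v) = S ∧ s ∉ Set.range v ↔
      s ∈ S ∧ Set.range v = S \ {s} := by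
    constructor
    · rintro ⟨rfl, hs⟩
      exact ⟨Set.mem_insert _ _, (Set.insert_sdiff_self_of_notMem hs).symm⟩
    · rintro ⟨hs, hv⟩
      rw [hv, Set.insert_sdiff_singleton, Set.insert_eq_of_mem hs]
      exact ⟨rfl, fun h ↦ h.2 rfl⟩
  simp only [avoidingArrangements, Set.mem_ofPred_eq, Fin.forall_fin_succ, Fin.cons_zero,
    Fin.cons_succ, hzero, hsucc, hsub, Fin.cons_injective_iff, Fin.range_cons]
  constructor
  · rintro ⟨⟨hs, hv⟩, hS, hjs, h⟩
    obtain ⟨hsS, hvS⟩ := hrange.1 ⟨hS, hs⟩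
    exact ⟨⟨hsS, (subsingleton_setOf_lt_iff hv hvS).1 hjs⟩, hv, hvS, h⟩
  · rintro ⟨⟨hsS, hts⟩, hv, hvS, h⟩
    obtain ⟨hS, hs⟩ := hrange.2 ⟨hsS, hvS⟩
    exact ⟨⟨hs, hv⟩, hS, (subsingleton_setOf_lt_iff hv hvS).2 hts, h⟩

theorem not_containsPattern_iff_subsingleton {σ : Equiv.Perm (Fin n)} :
    ¬ containsPattern σ p123 ∧ ¬ containsPattern σ p132 ↔
      ∀ i, {j | i < j ∧ σ i < σ j}.Subsingleton := by
  constructor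
  · rintro ⟨h123, h132⟩ i j ⟨hij, hσij⟩ k ⟨hik, hσik⟩
    by_contra hjk
    wlog hlt : j < k generalizing j k
    · exact this hik hσik hij hσij (Ne.symm hjk) ((not_lt.1 hlt).lt_of_ne' hjk)
    have hmono : StrictMono ![i, j, k] := by
      intro a b hab
      fin_cases a <;> fin_cases b <;> simp_all
    rcases lt_or_gt_of_ne (σ.injective.ne hjk) with h | h
    · refine h123 ⟨![i, j, k], hmono, fun a b ↦ ?_⟩
      fin_cases a <;> fin_cases b <;> simp [p123, h, hσij, hσik, h.le, hσij.le, hσik.le]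
    · have h₀ : p132 0 = 0 := by decide
      have h₁ : p132 1 = 2 := by decide
      have h₂ : p132 2 = 1 := by decide
      refine h132 ⟨![i, j, k], hmono, fun a b ↦ ?_⟩
      fin_cases a <;> fin_cases b <;> simp [h₀, h₁, h₂, h, hσij, hσik, h.le, hσij.le, hσik.le]
  · intro h
    have hno {π : Equiv.Perm (Fin 3)} (h₁ : π 0 < π 1) (h₂ : π 0 < π 2) :
        ¬ containsPattern σ π := by
      rintro ⟨f, hf, hπ⟩
      have hf₁ : f 0 < f 1 ∧ σ (f 0) < σ (f 1) := ⟨hf (by decide), (hπ 0 1).2 h₁⟩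
      have hf₂ : f 0 < f 2 ∧ σ (f 0) < σ (f 2) := ⟨hf (by decide), (hπ 0 2).2 h₂⟩
      exact absurd (hf.injective (h (f 0) hf₁ hf₂)) (by decide)
    exact ⟨hno (by decide) (by decide), hno (by decide) (by decide)⟩

theorem avoidingArrangements_Icc :
    avoidingArrangements n (Set.Icc 1 n) = (fun σ i ↦ (σ i : ℕ) + 1) ''
      {σ : Equiv.Perm (Fin n) | ¬ containsPattern σ p123 ∧ ¬ containsPattern σ p132} := by
  simp only [not_containsPattern_iff_subsingleton]
  ext v
  constructor
  · rintro ⟨hinj, hrange, h⟩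
    have hIcc (i : Fin n) : 1 ≤ v i ∧ v i ≤ n := hrange.subset (Set.mem_range_self i)
    have hbij : Function.Bijective fun i ↦ (⟨v i - 1, by grind⟩ : Fin n) :=
      Finite.injective_iff_bijective.1 fun i j hij ↦ hinj (by grind)
    obtain ⟨σ, hσ⟩ : ∃ σ : Equiv.Perm (Fin n), ∀ i, v i = σ i + 1 :=
      ⟨Equiv.ofBijective _ hbij, fun i ↦ (Nat.sub_add_cancel (hIcc i).1).symm⟩
    exact ⟨σ, by simpa [hσ] using h, (funext hσ).symm⟩
  · rintro ⟨σ, hσ, rfl⟩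
    refine ⟨fun i j hij ↦ σ.injective (Fin.ext (Nat.succ_injective hij)), ?_, by simpa using hσ⟩
    ext t
    simp only [Set.mem_range, Set.mem_Icc]
    constructor
    · rintro ⟨i, rfl⟩
      exact ⟨by omega, (σ i).isLt⟩
    · rintro ⟨h1t, htn⟩
      exact ⟨σ.symm ⟨t - 1, by omega⟩, by simp [h1t]⟩

/-- The sequence of differences between `m • (n, n - 1, …, 1)` and `x`; the map `steps m` is an
involution. -/
def steps {R : Type*} [Ring R] (m : R) (x : Fin n → R) : Fin n → R :=
  fun i ↦ m * (n - (i : ℕ)) - x i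

theorem steps_involutive {R : Type*} [Ring R] (m : R) :
    Function.Involutive (steps m : (Fin n → R) → Fin n → R) :=
  fun _ ↦ funext fun _ ↦ sub_sub_cancel _ _

theorem steps_cons {R : Type*} [Ring R] (m t : R) (x : Fin n → R) :
    steps m (Fin.cons t x : Fin (n + 1) → R) = Fin.cons (m * (n + 1) - t) (steps m x) := by
  ext i
  cases i using Fin.cases <;> simp [steps]

theorem mem_insert_Icc_and_subsingleton_iff {h s : ℕ} :
    s ∈ insert (n + 2 + h) (Set.Icc 1 (n + 1)) ∧
        {t ∈ insert (n + 2 + h) (Set.Icc 1 (n + 1)) | s < t}.Subsingleton ↔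
      s = n + 2 + h ∨ s = n + 1 := by
  constructor
  · rintro ⟨rfl | hs, hsub⟩
    · exact Or.inl rfl
    · right
      by_contra hne
      have hlt : s < n + 1 := by grind
      have := hsub ⟨Set.mem_insert _ _, by omega⟩ ⟨Or.inr ⟨by omega, le_rfl⟩, hlt⟩
      omega
  · rintro (rfl | rfl)
    · exact ⟨Set.mem_insert _ _, fun t _ ↦ by grind⟩
    · exact ⟨by grind, fun t ht u hu ↦ by grind⟩

theorem cons_mem_avoidingArrangements_insert_Icc {h t : ℕ} {w : Fin (n + 1) → ℕ} :
    (Fin.cons t w : Fin (n + 2) → ℕ) ∈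
        avoidingArrangements (n + 2) (insert (n + 2 + h) (Set.Icc 1 (n + 1))) ↔
      t = n + 1 ∧ w ∈ avoidingArrangements (n + 1) (insert (n + 1 + (h + 1)) (Set.Icc 1 n)) ∨
        t = n + 2 + h ∧ w ∈ avoidingArrangements (n + 1) (insert (n + 1 + 0) (Set.Icc 1 n)) := by
  have hclimb : insert (n + 2 + h) (Set.Icc 1 (n + 1)) \ {n + 1} =
      insert (n + 1 + (h + 1)) (Set.Icc 1 n) := by grind
  have hfall : insert (n + 2 + h) (Set.Icc 1 (n + 1)) \ {n + 2 + h} =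
      insert (n + 1 + 0) (Set.Icc 1 n) := by grind
  rw [cons_mem_avoidingArrangements, mem_insert_Icc_and_subsingleton_iff, ← hclimb, ← hfall]
  grind

variable {R : Type*} [CommRing R] [LinearOrder R] [IsStrictOrderedRing R]

theorem cons_mem_extremalWalks_one {h : ℕ} {s : R} {b : Fin n → R} :
    (Fin.cons s b : Fin (n + 1) → R) ∈ extremalWalks (n + 1) 1 (h : R) ↔
      s = 1 ∧ b ∈ extremalWalks n 1 ((h + 1 : ℕ) : R) ∨
        s = -h ∧ b ∈ extremalWalks n 1 ((0 : ℕ) : R) := by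
  rw [cons_mem_extremalWalks, Nat.cast_succ, Nat.cast_zero]
  constructor
  · rintro ⟨-, -, rfl | hs, hb⟩
    · exact Or.inl ⟨rfl, hb⟩
    · exact Or.inr ⟨eq_neg_of_add_eq_zero_right hs, by rwa [hs] at hb⟩
  · rintro (⟨rfl, hb⟩ | ⟨rfl, hb⟩)
    · exact ⟨le_rfl, by positivity, Or.inl rfl, hb⟩
    · rw [add_neg_cancel]
      exact ⟨by linarith [h.cast_nonneg (α := R)], le_rfl, Or.inr rfl, hb⟩

theorem extremalWalks_one_eq_image (n h : ℕ) :
    extremalWalks (n + 1) 1 (h : R) = (fun v ↦ steps 1 (Nat.cast ∘ v)) ''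
      avoidingArrangements (n + 1) (insert (n + 1 + h) (Set.Icc 1 n)) := by
  induction n generalizing h with
  | zero =>
    ext a
    cases a using Fin.consCases with | _ s b
    simp only [Set.mem_image, Fin.exists_fin_succ_pi, cons_mem_extremalWalks_one,
      mem_extremalWalks_zero, cons_mem_avoidingArrangements, mem_avoidingArrangements_zero,
      Fin.comp_cons, steps_cons, Fin.cons_inj]
    constructor
    · rintro (⟨-, hne⟩ | ⟨rfl, -⟩)
      · exact absurd hne (Nat.cast_ne_zero.2 h.succ_ne_zero)
      · exact ⟨1 + h, finZeroElim, ⟨⟨by simp, fun t _ ↦ by grind⟩, by simp⟩, by simp,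
          Subsingleton.elim _ _⟩
    · rintro ⟨t, -, ⟨⟨ht, -⟩, -⟩, rfl, -⟩
      obtain rfl : t = 1 + h := by grind
      exact Or.inr ⟨by simp, Nat.cast_zero⟩
  | succ n ih =>
    ext a
    cases a using Fin.consCases with | _ s b
    rw [Set.mem_image, Fin.exists_fin_succ_pi]
    simp only [cons_mem_extremalWalks_one, ih, cons_mem_avoidingArrangements_insert_Icc,
      Fin.comp_cons, steps_cons, Fin.cons_inj]
    constructor
    · rintro (⟨rfl, w, hw, rfl⟩ | ⟨rfl, w, hw, rfl⟩)
      · exact ⟨n + 1, w, Or.inl ⟨rfl, hw⟩, by simp, rfl⟩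
      · exact ⟨n + 2 + h, w, Or.inr ⟨rfl, hw⟩, by push_cast; ring, rfl⟩
    · rintro ⟨_, w, ⟨rfl, hw⟩ | ⟨rfl, hw⟩, rfl, rfl⟩
      · exact Or.inl ⟨by simp, w, hw, rfl⟩
      · exact Or.inr ⟨by push_cast; ring, w, hw, rfl⟩

end Arrangements

section Polytope

variable {n : ℕ}

theorem image_permPoint :
    permPoint '' {σ : Equiv.Perm (Fin (n + 1)) |
      ¬ containsPattern σ p123 ∧ ¬ containsPattern σ p132} =
      steps 1 '' extremalWalks (n + 1) (1 : ℝ) 0 := by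
  have hpoint : (permPoint : Equiv.Perm (Fin (n + 1)) → _) =
      fun σ ↦ Nat.cast ∘ fun i ↦ (σ i : ℕ) + 1 := by
    ext σ i
    simp [permPoint]
  have hIcc : insert (n + 1 + 0) (Set.Icc 1 n) = Set.Icc 1 (n + 1) := by grind
  rw [← Nat.cast_zero, extremalWalks_one_eq_image, hIcc, avoidingArrangements_Icc,
    Set.image_image, Set.image_image, hpoint]
  simp only [steps_involutive _ _]

theorem image_steps_convexHull {𝕜 : Type*} [Ring 𝕜] [PartialOrder 𝕜]
    (m : 𝕜) (s : Set (Fin n → 𝕜)) : steps m '' convexHull 𝕜 s = convexHull 𝕜 (steps m '' s) :=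
  (AffineEquiv.constVSub 𝕜 fun i : Fin n ↦ m * (n - (i : ℕ))).toAffineMap.image_convexHull s

theorem P123132_succ : P123132 (n + 1) = steps 1 '' walks (n + 1) (1 : ℝ) 0 := by
  rw [P123132, image_permPoint, walks_eq_convexHull zero_le_one le_rfl, image_steps_convexHull]

theorem smul_P123132_succ {m : ℝ} (hm : 0 < m) :
    m • P123132 (n + 1) = steps m '' walks (n + 1) m 0 := by
  have hsmul (a : Fin (n + 1) → ℝ) : m • steps 1 a = steps m (m • a) := by
    ext i
    simp [steps, mul_sub]
  have hwalks : m • walks (n + 1) (1 : ℝ) 0 = walks (n + 1) m 0 := by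
    ext a
    rw [Set.mem_smul_set_iff_inv_smul_mem₀ hm.ne', ← smul_mem_walks_iff hm, smul_inv_smul₀ hm.ne',
      mul_one, mul_zero]
  rw [P123132_succ, ← hwalks, ← Set.image_smul, ← Set.image_smul, Set.image_image, Set.image_image]
  simp only [hsmul]

theorem intCast_mem_smul_P123132_iff {m : ℕ} (hm : 0 < m) {x : Fin (n + 1) → ℤ} :
    (fun i ↦ (x i : ℝ)) ∈ (m : ℝ) • P123132 (n + 1) ↔
      steps (m : ℤ) x ∈ walks (n + 1) (m : ℤ) 0 := by
  rw [smul_P123132_succ (by exact_mod_cast hm), (steps_involutive _).image_eq_preimage_symm,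
    Set.mem_preimage]
  simp only [walks, steps, Set.mem_ofPred_eq]
  norm_cast

theorem succ_mul_ncard_smul_P123132 {m : ℕ} (hm : 0 < m) :
    (n + 1) * {x : Fin (n + 1) → ℤ | (fun i ↦ (x i : ℝ)) ∈ (m : ℝ) • P123132 (n + 1)}.ncard =
      ((m + 1) * (n + 1)).choose n := by
  simp only [intCast_mem_smul_P123132_iff hm]
  rw [← succ_mul_ncard_walks]
  congr 1
  exact Set.ncard_congr' ((steps_involutive (m : ℤ)).toPerm.subtypeEquiv fun _ ↦ Iff.rfl)

end Polytope

theorem stmt6 (n : ℕ) (hn : 2 ≤ n) :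
    Set.ncard {x : Fin n → ℤ | (fun i => (x i : ℝ)) ∈ P123132 n} = catalan n ∧
    Filter.Tendsto
      (fun m : ℕ =>
        (Set.ncard {x : Fin n → ℤ | (fun i => (x i : ℝ)) ∈ (m : ℝ) • P123132 n} : ℝ) /
          (m : ℝ) ^ (n - 1))
      Filter.atTop
      (nhds ((n : ℝ) ^ (n - 2) / Nat.factorial (n - 1))) := by
  obtain ⟨k, rfl⟩ := Nat.exists_eq_add_of_le' hn
  constructor
  · have hcount := succ_mul_ncard_smul_P123132 (n := k + 1) one_pos
    rw [← succ_mul_catalan_succ, Nat.cast_one, one_smul] at hcount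
    exact Nat.eq_of_mul_eq_mul_left (Nat.succ_pos _) hcount
  · have hlim := (tendsto_choose_succ_mul_div_pow (Nat.succ_pos (k + 1)) (k + 1)).div_const
      ((k + 1 + 1 : ℕ) : ℝ)
    have hvalue : ((k + 2 : ℕ) : ℝ) ^ (k + 1) / (k + 1).factorial / (k + 2 : ℕ) =
        ((k + 2 : ℕ) : ℝ) ^ k / (k + 1).factorial := by
      rw [div_right_comm, pow_succ, mul_div_cancel_right₀ _ (by positivity)]
    rw [hvalue] at hlim
    refine hlim.congr' ?_
    filter_upwards [eventually_gt_atTop 0] with m hm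
    rw [← succ_mul_ncard_smul_P123132 hm, Nat.cast_mul]
    field_simp
    norm_num
end

section
/- For all n ≥ 1 and all integers m ≥ 0, the number of lattice points in the m-th dilate of P_n(123,132,312) is |m·P_n(123,132,312) ∩ ℤ^n| = (1+m)^{n−1}. -/
/-
Only the position of the maximum is free in a permutation avoiding 123, 132 and 312, since the
other entries decrease, so the polytope has `n` vertices `v₀, …, vₙ₋₁`. For a point `x` let `Tᵢ`
be the sum over `j < i` of the excess of `xⱼ` over the `j`-th entry of `m • (n - 1, …, 1, 0)`. For
`m = 1` the vertex `vₖ` has `Tᵢ = i` when `k < i` and `Tᵢ = 0` otherwise, so `m • P` is cut out by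
`0 ≤ T₁ / 1 ≤ ⋯ ≤ Tₙ / n = m`, and its lattice points correspond to the lecture hall sequences
with last term `n * m`. The number of lecture hall sequences `(T₁, …, T_N)` with `T_N ≤ N * q + r`
and `r ≤ N` is `(q + 1) ^ (N - r) * (q + 2) ^ r`, by induction on the bound: the sequences whose
last term equals the bound restrict to shorter sequences of the same kind.
-/

open Pointwise

/-- The polytope `P_n(123,132,312)`. -/
def P123132312 (n : ℕ) : Set (Fin n → ℝ) :=
  convexHull ℝ (permPoint ''
    {σ : Equiv.Perm (Fin n) |
      ¬ containsPattern σ p123 ∧ ¬ containsPattern σ p132 ∧ ¬ containsPattern σ p312})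

section AvoidingPermutations

theorem equiv_eq_of_lt_iff_lt {α β : Type*} [LinearOrder α] [LinearOrder β] [WellFoundedLT β]
    {σ τ : α ≃ β} (h : ∀ i j, i < j → (σ i < σ j ↔ τ i < τ j)) : σ = τ := by
  have lt_iff (i j : α) : σ i < σ j ↔ τ i < τ j := by
    rcases lt_trichotomy i j with hij | rfl | hij
    · exact h i j hij
    · simp
    · rw [← not_iff_not, not_lt, not_lt, (σ.injective.ne hij.ne).le_iff_lt,
        (τ.injective.ne hij.ne).le_iff_lt, h j i hij]
  have hmono : StrictMono (τ.symm.trans σ) := fun a b hab => by simpa [lt_iff] using hab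
  let e : β ≃o β := hmono.orderIsoOfSurjective _ (τ.symm.trans σ).surjective
  have he : e = OrderIso.refl β := Subsingleton.elim _ _
  ext i
  simpa [e] using DFunLike.congr_fun he (τ i)

variable {n : ℕ}

/-- The permutation of `Fin n` with its largest value at position `k` and the remaining values in
decreasing order: position `k` is moved to the front before the order is reversed. -/
def decreasingWithMaxAt (k : Fin n) : Equiv.Perm (Fin n) :=
  k.cycleRange.trans Fin.revPerm

theorem val_cycleRange (k i : Fin n) :
    (k.cycleRange i : ℕ) = if i < k then (i : ℕ) + 1 else if i = k then 0 else i := by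
  split_ifs with hlt heq
  · exact Fin.coe_cycleRange_of_lt hlt
  · rw [Fin.coe_cycleRange_of_le heq.le, if_pos heq]
  · rw [Fin.cycleRange_of_gt (lt_of_le_of_ne (not_lt.mp hlt) (Ne.symm heq))]

theorem decreasingWithMaxAt_lt_iff {k i j : Fin n} (hij : i < j) :
    decreasingWithMaxAt k i < decreasingWithMaxAt k j ↔ j = k := by
  simp only [decreasingWithMaxAt, Equiv.trans_apply, Fin.revPerm_apply, Fin.rev_lt_rev]
  simp only [Fin.lt_def, val_cycleRange, Fin.ext_iff] at hij ⊢
  split_ifs <;> lia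

theorem containsPattern_of_strictMono {k : ℕ} {σ : Equiv.Perm (Fin n)} {π : Equiv.Perm (Fin k)}
    {f : Fin k → Fin n} (hf : StrictMono f) (hσ : StrictMono fun v => σ (f (π.symm v))) :
    containsPattern σ π :=
  ⟨f, hf, fun a b => by simpa using hσ.lt_iff_lt (a := π a) (b := π b)⟩

theorem containsPattern_of_lt {σ : Equiv.Perm (Fin n)} {π : Equiv.Perm (Fin 3)} {a b c : Fin n}
    (hab : a < b) (hbc : b < c) (h01 : σ (![a, b, c] (π.symm 0)) < σ (![a, b, c] (π.symm 1)))
    (h12 : σ (![a, b, c] (π.symm 1)) < σ (![a, b, c] (π.symm 2))) : containsPattern σ π := by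
  refine containsPattern_of_strictMono (f := ![a, b, c]) ?_ ?_ <;>
    refine Fin.strictMono_iff_lt_succ.mpr fun i => ?_ <;> fin_cases i
  exacts [hab, hbc, h01, h12]

theorem exists_ascents_end_at_of_avoids [NeZero n] {σ : Equiv.Perm (Fin n)}
    (h123 : ¬ containsPattern σ p123) (h132 : ¬ containsPattern σ p132)
    (h312 : ¬ containsPattern σ p312) : ∃ k, ∀ i j, i < j → (σ i < σ j ↔ j = k) := by
  obtain ⟨k, hmax⟩ := Finite.exists_max σ
  refine ⟨k, fun i j hij => ⟨fun hlt => ?_, ?_⟩⟩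
  · by_contra hjk
    have hj : σ j < σ k := (hmax j).lt_of_ne (σ.injective.ne hjk)
    have hik : i ≠ k := fun h => (hlt.trans hj).ne (congrArg σ h)
    rcases lt_or_gt_of_ne hik with hik | hki
    · rcases lt_or_gt_of_ne hjk with hjk | hkj
      · exact h123 (containsPattern_of_lt hij hjk hlt hj)
      · exact h132 (containsPattern_of_lt hik hkj hlt hj)
    · exact h312 (containsPattern_of_lt hki hij hlt hj)
  · rintro rfl
    exact (hmax i).lt_of_ne (σ.injective.ne hij.ne)

theorem avoids_of_ascents_end_at {σ : Equiv.Perm (Fin n)} {k : Fin n}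
    (h : ∀ i j, i < j → (σ i < σ j ↔ j = k)) :
    ¬ containsPattern σ p123 ∧ ¬ containsPattern σ p132 ∧ ¬ containsPattern σ p312 := by
  refine ⟨?_, ?_, ?_⟩ <;> rintro ⟨f, hf, hσ⟩ <;>
    have h01 : f 0 < f 1 := hf (by decide) <;>
    have h12 : f 1 < f 2 := hf (by decide)
  · have h1 : f 1 = k := (h _ _ h01).mp ((hσ 0 1).mpr (by decide))
    have h2 : f 2 = k := (h _ _ h12).mp ((hσ 1 2).mpr (by decide))
    exact h12.ne (h1.trans h2.symm)
  · have h1 : f 1 = k := (h _ _ h01).mp ((hσ 0 1).mpr (by decide))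
    have h2 : f 2 = k := (h _ _ (h01.trans h12)).mp ((hσ 0 2).mpr (by decide))
    exact h12.ne (h1.trans h2.symm)
  · have h2 : f 2 = k := (h _ _ h12).mp ((hσ 1 2).mpr (by decide))
    have h02 : σ (f 0) < σ (f 2) := (h _ _ (h01.trans h12)).mpr h2
    exact h02.asymm ((hσ 2 0).mpr (by decide))

theorem setOf_avoids_eq_range_decreasingWithMaxAt [NeZero n] :
    {σ : Equiv.Perm (Fin n) |
      ¬ containsPattern σ p123 ∧ ¬ containsPattern σ p132 ∧ ¬ containsPattern σ p312} =
      Set.range decreasingWithMaxAt := by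
  ext σ
  constructor
  · rintro ⟨h123, h132, h312⟩
    obtain ⟨k, hk⟩ := exists_ascents_end_at_of_avoids h123 h132 h312
    refine ⟨k, equiv_eq_of_lt_iff_lt fun i j hij => ?_⟩
    rw [decreasingWithMaxAt_lt_iff hij, hk i j hij]
  · rintro ⟨k, rfl⟩
    exact avoids_of_ascents_end_at fun i j hij => decreasingWithMaxAt_lt_iff hij

end AvoidingPermutations

section ConvexHull

variable {ι E : Type*} [Fintype ι] [AddCommGroup E] [Module ℝ E]

theorem convexHull_range_eq_image_stdSimplex (v : ι → E) :
    convexHull ℝ (Set.range v) = Fintype.linearCombination ℝ v '' stdSimplex ℝ ι := by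
  classical
  rw [← convexHull_rangle_single_eq_stdSimplex, LinearMap.image_convexHull, ← Set.range_comp]
  congr 2
  ext i
  simp

theorem mem_smul_convexHull_range_iff [Nonempty ι] {v : ι → E} {c : ℝ} (hc : 0 ≤ c) {x : E} :
    x ∈ c • convexHull ℝ (Set.range v) ↔
      ∃ w : ι → ℝ, (∀ k, 0 ≤ w k) ∧ ∑ k, w k = c ∧ ∑ k, w k • v k = x := by
  rw [convexHull_range_eq_image_stdSimplex, Set.mem_smul_set]
  simp only [Set.exists_mem_image, Fintype.linearCombination_apply, Finset.smul_sum, smul_smul]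
  constructor
  · rintro ⟨w, ⟨hw_nonneg, hw_sum⟩, rfl⟩
    refine ⟨fun k => c * w k, fun k => mul_nonneg hc (hw_nonneg k), ?_, rfl⟩
    rw [← Finset.mul_sum, hw_sum, mul_one]
  · rintro ⟨w, hw_nonneg, rfl, rfl⟩
    rcases hc.eq_or_lt with hc | hc
    · have hw : ∀ k, w k = 0 := by
        simpa using (Finset.sum_eq_zero_iff_of_nonneg fun k _ => hw_nonneg k).mp hc.symm
      obtain ⟨u, hu⟩ := Set.nonempty_coe_sort.mp (inferInstance : Nonempty (stdSimplex ℝ ι))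
      exact ⟨u, hu, by simp [hw]⟩
    · refine ⟨fun k => (∑ i, w i)⁻¹ * w k,
        ⟨fun k => mul_nonneg (inv_nonneg.mpr hc.le) (hw_nonneg k), ?_⟩, ?_⟩
      · rw [← Finset.mul_sum, inv_mul_cancel₀ hc.ne']
      · simp only [mul_inv_cancel_left₀ hc.ne']

end ConvexHull

section Excess

variable {R : Type*} [Ring R] {n : ℕ}

theorem partialSum_eq_sum_ite {M : Type*} [AddCommMonoid M] (f : Fin n → M) (i : Fin (n + 1)) :
    Fin.partialSum f i = ∑ k, if k.castSucc < i then f k else 0 := by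
  induction i using Fin.induction with
  | zero => simp
  | succ j ih =>
    have hsplit (k : Fin n) : (if k.castSucc < j.succ then f k else 0) =
        (if k.castSucc < j.castSucc then f k else 0) + if k = j then f k else 0 := by
      rcases lt_trichotomy k j with h | rfl | h
      · simp [h.le, h, h.ne]
      · simp
      · simp [h.not_ge, h.not_gt, h.ne']
    simp only [hsplit, Finset.sum_add_distrib, Finset.sum_ite_eq', Finset.mem_univ, if_true,
      Fin.partialSum_succ, ih]

theorem partialSum_last {M : Type*} [AddCommMonoid M] (f : Fin n → M) :
    Fin.partialSum f (Fin.last n) = ∑ k, f k := by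
  simp [partialSum_eq_sum_ite, Fin.castSucc_lt_last]

theorem exists_partialSum_eq {G : Type*} [AddGroup G] {S : Fin (n + 1) → G} (hS : S 0 = 0) :
    ∃ f : Fin n → G, Fin.partialSum f = S :=
  ⟨_, by simpa only [hS, zero_vadd] using Fin.partialSum_left_neg S⟩

theorem monotone_partialSum_iff {G : Type*} [AddCommGroup G] [PartialOrder G]
    [IsOrderedAddMonoid G] {f : Fin n → G} :
    Monotone (Fin.partialSum f) ↔ ∀ k, 0 ≤ f k := by
  simp [Fin.monotone_iff_le_succ, Fin.partialSum_succ]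

/-- The partial sums of `x - c • (n - 1, …, 1, 0)`. They linearise the inequalities of the `c`-th
dilate of the polytope. -/
def excess (c : R) (x : Fin n → R) : Fin (n + 1) → R :=
  Fin.partialSum fun j => x j - c * (j.rev : ℕ)

@[simp]
theorem excess_zero (c : R) (x : Fin n → R) : excess c x 0 = 0 :=
  Fin.partialSum_zero _

theorem excess_succ (c : R) (x : Fin n → R) (j : Fin n) :
    excess c x j.succ = excess c x j.castSucc + (x j - c * (j.rev : ℕ)) :=
  Fin.partialSum_succ _ j

theorem excess_injective (c : R) : Function.Injective (excess c : (Fin n → R) → _) := by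
  intro x y h
  ext j
  have hj := congrFun h j.succ
  simpa only [excess_succ, h, add_right_inj, sub_left_inj] using hj

theorem exists_excess_eq (c : R) {T : Fin (n + 1) → R} (hT : T 0 = 0) :
    ∃ x : Fin n → R, excess c x = T := by
  obtain ⟨f, rfl⟩ := exists_partialSum_eq hT
  exact ⟨fun j => f j + c * (j.rev : ℕ), by simp [excess]⟩

theorem excess_intCast (c : ℤ) (x : Fin n → ℤ) (i : Fin (n + 1)) :
    excess (c : R) (fun j => (x j : R)) i = excess c x i := by
  induction i using Fin.induction with
  | zero => simp
  | succ j ih => simp [excess_succ, ih]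

theorem excess_sum_smul {ι : Type*} [Fintype ι] (w : ι → R) (v : ι → Fin n → R)
    (i : Fin (n + 1)) :
    excess (∑ k, w k) (∑ k, w k • v k) i = ∑ k, w k * excess 1 (v k) i := by
  induction i using Fin.induction with
  | zero => simp
  | succ j ih =>
    simp only [excess_succ, ih, Finset.sum_apply, Pi.smul_apply, smul_eq_mul, mul_add, mul_sub,
      one_mul, Finset.sum_add_distrib, Finset.sum_sub_distrib, Finset.sum_mul]

theorem excess_permPoint_decreasingWithMaxAt (k : Fin n) (i : Fin (n + 1)) :
    excess 1 (permPoint (decreasingWithMaxAt k)) i = if k.castSucc < i then (i : ℝ) else 0 := by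
  induction i using Fin.induction with
  | zero => simp
  | succ j ih =>
    have cast_rev (a : Fin n) : ((a.rev : ℕ) : ℝ) = n - (a + 1) := by
      rw [Fin.val_rev, Nat.cast_sub (by lia)]
      push_cast
      rfl
    rw [excess_succ, ih]
    simp only [permPoint, decreasingWithMaxAt, Equiv.trans_apply, Fin.revPerm_apply, cast_rev,
      val_cycleRange, Fin.val_castSucc, Fin.val_succ]
    rcases lt_trichotomy j k with h | rfl | h
    · simp [h, h.not_gt, h.not_ge]
      ring
    · simp
    · simp [h, h.le, h.not_gt, h.ne']

theorem excess_sum_smul_permPoint (w : Fin n → ℝ) (i : Fin (n + 1)) :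
    excess (∑ k, w k) (∑ k, w k • permPoint (decreasingWithMaxAt k)) i =
      i * Fin.partialSum w i := by
  rw [excess_sum_smul, partialSum_eq_sum_ite, Finset.mul_sum]
  refine Finset.sum_congr rfl fun k _ => ?_
  rw [excess_permPoint_decreasingWithMaxAt]
  split_ifs <;> ring

/-- For `i = 0` the quotient is `0 / 0 = 0`. -/
theorem excess_sum_smul_permPoint_div (w : Fin n → ℝ) (i : Fin (n + 1)) :
    excess (∑ k, w k) (∑ k, w k • permPoint (decreasingWithMaxAt k)) i / i =
      Fin.partialSum w i := by
  rw [excess_sum_smul_permPoint, mul_div_cancel_left_of_imp]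
  intro hi
  have hi : i = 0 := mod_cast hi
  rw [hi, Fin.partialSum_zero]

theorem exists_sum_smul_permPoint_eq [NeZero n] {c : ℝ} {x : Fin n → ℝ}
    (hmono : Monotone fun i => excess c x i / i) (hlast : excess c x (Fin.last n) = n * c) :
    ∃ w : Fin n → ℝ, (∀ k, 0 ≤ w k) ∧ ∑ k, w k = c ∧
      ∑ k, w k • permPoint (decreasingWithMaxAt k) = x := by
  obtain ⟨w, hw⟩ := exists_partialSum_eq (S := fun i => excess c x i / i) (by simp)
  have hsum : ∑ k, w k = c := by
    rw [← partialSum_last, hw]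
    simp only [hlast, Fin.val_last]
    exact mul_div_cancel_left₀ c (Nat.cast_ne_zero.mpr (NeZero.ne n))
  refine ⟨w, monotone_partialSum_iff.mp (hw ▸ hmono), hsum, excess_injective c (funext fun i => ?_)⟩
  calc excess c (∑ k, w k • permPoint (decreasingWithMaxAt k)) i
      = i * Fin.partialSum w i := by rw [← excess_sum_smul_permPoint, hsum]
    _ = i * (excess c x i / i) := by rw [hw]
    _ = excess c x i := mul_div_cancel_of_imp' fun hi => by
      have hi : i = 0 := mod_cast hi
      rw [hi, excess_zero]

theorem mem_smul_P123132312_iff [NeZero n] {c : ℝ} (hc : 0 ≤ c) {x : Fin n → ℝ} :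
    x ∈ c • P123132312 n ↔
      Monotone (fun i => excess c x i / i) ∧ excess c x (Fin.last n) = n * c := by
  rw [P123132312, setOf_avoids_eq_range_decreasingWithMaxAt, ← Set.range_comp,
    mem_smul_convexHull_range_iff hc]
  constructor
  · rintro ⟨w, hw, rfl, rfl⟩
    refine ⟨?_, ?_⟩
    · simpa only [Function.comp_apply, excess_sum_smul_permPoint_div] using
        monotone_partialSum_iff.mpr hw
    · simp only [Function.comp_apply, excess_sum_smul_permPoint, partialSum_last, Fin.val_last]
  · rintro ⟨hmono, hlast⟩
    exact exists_sum_smul_permPoint_eq hmono hlast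

theorem excess_nonneg [NeZero n] {c : ℝ} (hc : 0 ≤ c) {x : Fin n → ℝ}
    (hx : x ∈ c • P123132312 n) (i : Fin (n + 1)) : 0 ≤ excess c x i := by
  rcases (Fin.zero_le i).eq_or_lt with rfl | hi
  · simp
  · have hdiv : 0 ≤ excess c x i / i := by
      simpa using ((mem_smul_P123132312_iff hc).mp hx).1 (Fin.zero_le i)
    have hi' : (0 : ℝ) < i := Nat.cast_pos.mpr hi
    exact not_lt.mp fun hneg => hdiv.not_gt (div_neg_of_neg_of_pos hneg hi')

end Excess

section LectureHall

/-- The lecture hall sequences `T₀ = 0 ≤ T₁ / 1 ≤ T₂ / 2 ≤ ⋯ ≤ T_N / N`, with denominators cleared;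
the extra term `T₀` makes the first inequality an instance of the general one. -/
def lectureHall (N : ℕ) : Set (Fin (N + 1) → ℕ) :=
  {T | T 0 = 0 ∧ ∀ i : Fin N, (i + 1) * T i.castSucc ≤ i * T i.succ}

theorem mem_lectureHall_iff_monotone_div {N : ℕ} {T : Fin (N + 1) → ℕ} :
    T ∈ lectureHall N ↔ T 0 = 0 ∧ Monotone fun i => (T i : ℝ) / i := by
  refine and_congr_right fun h0 => ?_
  rw [Fin.monotone_iff_le_succ]
  refine forall_congr' fun i => ?_
  rcases Nat.eq_zero_or_pos i with hi | hi
  · have hi0 : i.castSucc = 0 := Fin.ext hi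
    simp [hi, hi0, h0]
  · rw [Fin.val_castSucc, Fin.val_succ, div_le_div_iff₀ (by positivity) (by positivity)]
    norm_cast
    rw [mul_comm (T _), mul_comm (T _)]

theorem snoc_mem_lectureHall_iff {N a : ℕ} {T : Fin (N + 1) → ℕ} :
    (Fin.snoc T a : Fin (N + 2) → ℕ) ∈ lectureHall (N + 1) ↔
      T ∈ lectureHall N ∧ T (Fin.last N) ≤ N * a / (N + 1) := by
  have h0 : (Fin.snoc T a : Fin (N + 2) → ℕ) 0 = T 0 := Fin.snoc_castSucc (α := fun _ => ℕ) a T 0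
  simp only [lectureHall, Set.mem_ofPred_eq, h0, Fin.forall_fin_succ', Fin.succ_castSucc,
    Fin.snoc_castSucc, Fin.succ_last, Fin.snoc_last, Fin.val_castSucc, Fin.val_last, and_assoc,
    Nat.le_div_iff_mul_le N.succ_pos, mul_comm (T (Fin.last N))]

theorem setOf_lectureHall_last_eq (N a : ℕ) :
    {T ∈ lectureHall (N + 1) | T (Fin.last (N + 1)) = a} =
      (fun T => (Fin.snoc T a : Fin (N + 2) → ℕ)) ''
        {T ∈ lectureHall N | T (Fin.last N) ≤ N * a / (N + 1)} := by
  ext T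
  constructor
  · rintro ⟨hT, rfl⟩
    rw [← Fin.snoc_init_self T, snoc_mem_lectureHall_iff] at hT
    exact ⟨Fin.init T, hT, Fin.snoc_init_self T⟩
  · rintro ⟨T, hT, rfl⟩
    exact ⟨snoc_mem_lectureHall_iff.mpr hT, Fin.snoc_last _ _⟩

theorem encard_lectureHall_last_eq (N a : ℕ) :
    {T ∈ lectureHall (N + 1) | T (Fin.last (N + 1)) = a}.encard =
      {T ∈ lectureHall N | T (Fin.last N) ≤ N * a / (N + 1)}.encard := by
  rw [setOf_lectureHall_last_eq, (Fin.snoc_left_injective (α := fun _ => ℕ) a).encard_image]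

theorem encard_lectureHall_last_le_succ (N t : ℕ) :
    {T ∈ lectureHall (N + 1) | T (Fin.last (N + 1)) ≤ t + 1}.encard =
      {T ∈ lectureHall (N + 1) | T (Fin.last (N + 1)) ≤ t}.encard +
        {T ∈ lectureHall N | T (Fin.last N) ≤ N * (t + 1) / (N + 1)}.encard := by
  rw [← encard_lectureHall_last_eq, ← Set.encard_union_eq]
  · congr 1
    ext T
    simp only [Set.mem_ofPred_eq, Set.mem_union, ← and_or_left, Nat.le_succ_iff]
  · exact Set.disjoint_left.mpr fun T hle heq => by
      have := hle.2.trans_lt t.lt_succ_self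
      exact this.ne heq.2

theorem encard_lectureHall_last_le_of_base {N q : ℕ}
    (hlower : ∀ r ≤ N, {T ∈ lectureHall N | T (Fin.last N) ≤ N * q + r}.encard =
      (q + 1) ^ (N - r) * (q + 2) ^ r)
    (hbase : {T ∈ lectureHall (N + 1) | T (Fin.last (N + 1)) ≤ (N + 1) * q}.encard =
      (q + 1) ^ (N + 1)) {r : ℕ} (hr : r ≤ N + 1) :
    {T ∈ lectureHall (N + 1) | T (Fin.last (N + 1)) ≤ (N + 1) * q + r}.encard =
      (q + 1) ^ (N + 1 - r) * (q + 2) ^ r := by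
  induction r with
  | zero => simpa using hbase
  | succ r ih =>
    have hdiv : N * ((N + 1) * q + r + 1) / (N + 1) = N * q + r := by
      apply Nat.div_eq_of_lt_le <;> nlinarith
    rw [← add_assoc, encard_lectureHall_last_le_succ, ih (by lia), hdiv, hlower r (by lia),
      Nat.succ_sub (by lia : r ≤ N), Nat.succ_sub_succ, pow_succ, pow_succ]
    ring

theorem encard_lectureHall_last_le (N q : ℕ) {r : ℕ} (hr : r ≤ N) :
    {T ∈ lectureHall N | T (Fin.last N) ≤ N * q + r}.encard =
      (q + 1) ^ (N - r) * (q + 2) ^ r := by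
  induction N generalizing q r with
  | zero =>
    obtain rfl : r = 0 := by lia
    have hzero : {T ∈ lectureHall 0 | T (Fin.last 0) ≤ 0 * q + 0} = {0} := by
      ext T
      simp [lectureHall, funext_iff, Fin.forall_fin_one]
    rw [hzero, Set.encard_singleton, Nat.sub_zero, pow_zero, pow_zero, mul_one]
  | succ N ih =>
    refine encard_lectureHall_last_le_of_base (fun r => ih q) ?_ hr
    clear hr
    induction q with
    | zero => simpa [encard_lectureHall_last_eq] using ih 0 (Nat.zero_le N)
    | succ q ihq =>
      have := encard_lectureHall_last_le_of_base (fun r => ih q) ihq le_rfl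
      simpa [mul_add, add_assoc, one_add_one_eq_two] using this

end LectureHall

section LatticePoints

variable {n : ℕ} [NeZero n]

theorem intCast_mem_smul_P123132312_iff {m : ℕ} {x : Fin n → ℤ} {T : Fin (n + 1) → ℕ}
    (h : excess (m : ℤ) x = fun i => (T i : ℤ)) :
    (fun i => (x i : ℝ)) ∈ (m : ℝ) • P123132312 n ↔
      T ∈ lectureHall n ∧ T (Fin.last n) = n * m := by
  have hexcess (i) : excess (m : ℝ) (fun j => (x j : ℝ)) i = T i := by
    simpa [h] using excess_intCast (R := ℝ) m x i
  have h0 : T 0 = 0 := by simpa using (congrFun h 0).symm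
  simp only [mem_smul_P123132312_iff m.cast_nonneg, hexcess, mem_lectureHall_iff_monotone_div, h0,
    true_and]
  norm_cast

theorem image_excess_latticePoints (m : ℕ) :
    excess (m : ℤ) '' {x : Fin n → ℤ | (fun i => (x i : ℝ)) ∈ (m : ℝ) • P123132312 n} =
      (fun T i => (T i : ℤ)) '' {T ∈ lectureHall n | T (Fin.last n) = n * m} := by
  ext E
  constructor
  · rintro ⟨x, hx, rfl⟩
    have hnonneg (i) : 0 ≤ excess (m : ℤ) x i := by
      have := excess_nonneg m.cast_nonneg hx i
      rw [← Int.cast_natCast m, excess_intCast] at this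
      exact_mod_cast this
    have hT : excess (m : ℤ) x = fun i => ((excess (m : ℤ) x i).toNat : ℤ) :=
      funext fun i => (Int.toNat_of_nonneg (hnonneg i)).symm
    exact ⟨_, (intCast_mem_smul_P123132312_iff hT).mp hx, hT.symm⟩
  · rintro ⟨T, hT, rfl⟩
    obtain ⟨x, hx⟩ := exists_excess_eq (m : ℤ) (T := fun i => (T i : ℤ)) (by simp [hT.1.1])
    exact ⟨x, (intCast_mem_smul_P123132312_iff hx).mpr hT, hx⟩

theorem encard_latticePoints (m : ℕ) :
    {x : Fin n → ℤ | (fun i => (x i : ℝ)) ∈ (m : ℝ) • P123132312 n}.encard =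
      {T ∈ lectureHall n | T (Fin.last n) = n * m}.encard := by
  have hcast : Function.Injective fun (T : Fin (n + 1) → ℕ) i => (T i : ℤ) :=
    Nat.cast_injective.comp_left
  rw [← (excess_injective (m : ℤ)).encard_image, image_excess_latticePoints, hcast.encard_image]

end LatticePoints

theorem stmt7 (n : ℕ) (hn : 1 ≤ n) (m : ℕ) :
    Set.ncard {x : Fin n → ℤ | (fun i => (x i : ℝ)) ∈ (m : ℝ) • P123132312 n} =
      (1 + m) ^ (n - 1) := by
  obtain ⟨N, rfl⟩ := Nat.exists_eq_add_of_le' hn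
  have hdiv : N * ((N + 1) * m) / (N + 1) = N * m + 0 := by
    rw [Nat.mul_left_comm, Nat.mul_div_cancel_left _ N.succ_pos, add_zero]
  rw [Set.ncard_def, encard_latticePoints, encard_lectureHall_last_eq, hdiv,
    encard_lectureHall_last_le N m N.zero_le, Nat.sub_zero, pow_zero, mul_one, Nat.add_sub_cancel,
    add_comm 1 m]
  norm_cast
end
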